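/- arXiv:2502.15647 — 3 statements merged into one kernel-verified Lean document; each statement's English description precedes it below -/
import Mathlib

section
/- Let q be a prime power and let G = {β_0, β_1, …, β_{q−1}} be a subgroup of the symmetric group S_q on a set X of q elements such that |G| = q and every element of G other than the identity has no fixed point in X. Let h be a permutation of X such that for every i ∈ {0,…,q−1} there is exactly one x ∈ X with h(x) = β_i(x). Then: (1) for all 0 ≤ i ≠ j ≤ q−1, the permutation (h β_i)(h β_j)^{−1} has no fixed point in X; and (2) for all i, j ∈ {0,…,q−1} there is exactly one x ∈ X with β_i(x) = h(β_j(x)). -/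
/-!
Left multiplication by `h` turns the quotient `β_i β_j⁻¹` into its conjugate
`h (β_i β_j⁻¹) h⁻¹`, which has a fixed point only if `β_i β_j⁻¹` does; and `β_i β_j⁻¹ ≠ 1` for
`i ≠ j`, because `q` indices exhaust a group of order `q`. Moreover `β_i β_j⁻¹` is some `β_k`,
and substituting `y = β_j x` turns the equation `β_i x = h (β_j x)` into `β_k y = h y`.
-/

/-- `f` and `g` intersect simply: they agree at exactly one point. The paper's notion for
permutations, stated for arbitrary functions. -/
def IntersectSimply {X Y : Type*} (f g : X → Y) : Prop :=
  ∃! x, f x = g x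

/-- A permutation polynomial tuple, with an arbitrary index type in place of
`{0, …, q - 1}` and no condition on the size of `X`. -/
def IsPermPolyTuple {X ι : Type*} (γ : ι → Equiv.Perm X) : Prop :=
  ∀ i j, i ≠ j → ∀ x, (γ i * (γ j)⁻¹) x ≠ x

/-- The companion (orthogonal mate) relation between local permutation polynomials, expressed
through their associated tuples of permutations. -/
def AreCompanions {X ι : Type*} (β γ : ι → Equiv.Perm X) : Prop :=
  ∀ i j, IntersectSimply (β i) (γ j)

theorem injective_of_natCard_le_natCard_range {ι α : Type*} [Finite ι] {f : ι → α}
    (hcard : Nat.card ι ≤ Nat.card (Set.range f)) : Function.Injective f :=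
  Subtype.val_injective.comp
    (Set.rangeFactorization_surjective.bijective_of_nat_card_le hcard).injective

theorem IntersectSimply.symm {X Y : Type*} {f g : X → Y} (hfg : IntersectSimply f g) :
    IntersectSimply g f := by
  simpa only [IntersectSimply, eq_comm] using hfg

theorem intersectSimply_comp_equiv_iff {W X Y : Type*} {f : X → Y} {g : W → Y} (e : W ≃ X) :
    IntersectSimply (f ∘ e) g ↔ IntersectSimply f (g ∘ e.symm) :=
  e.existsUnique_congr fun w => by simp only [Function.comp_apply, Equiv.symm_apply_apply]

section Perm

variable {X ι : Type*} {β : ι → Equiv.Perm X} {G : Subgroup (Equiv.Perm X)}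

theorem IsPermPolyTuple.mul_left (hβ : IsPermPolyTuple β) (h : Equiv.Perm X) :
    IsPermPolyTuple fun i => h * β i := by
  intro i j hij x hx
  have conj : (h * β i) * (h * β j)⁻¹ = h * (β i * (β j)⁻¹) * h⁻¹ := by group
  rw [conj, Equiv.Perm.mul_apply, Equiv.Perm.mul_apply, ← Equiv.Perm.eq_inv_iff_eq] at hx
  exact hβ i j hij (h⁻¹ x) hx

theorem isPermPolyTuple_of_injective (hfree : ∀ g ∈ G, g ≠ 1 → ∀ x, g x ≠ x)
    (hinj : Function.Injective β) (hmem : ∀ i, β i ∈ G) : IsPermPolyTuple β :=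
  fun i j hij => hfree _ (G.mul_mem (hmem i) (G.inv_mem (hmem j)))
    (mul_inv_eq_one.not.mpr (hinj.ne hij))

theorem areCompanions_mul_left {h : Equiv.Perm X}
    (hrange : Set.range β = (G : Set (Equiv.Perm X)))
    (hint : ∀ i, IntersectSimply h (β i)) : AreCompanions β fun i => h * β i := by
  intro i j
  have hmem (i : ι) : β i ∈ G := hrange.subset (Set.mem_range_self i)
  obtain ⟨k, hk⟩ : ∃ k, β k = β i * (β j)⁻¹ :=
    hrange.superset (G.mul_mem (hmem i) (G.inv_mem (hmem j)))
  have quotient : IntersectSimply h (β i * (β j)⁻¹ : Equiv.Perm X) := hk ▸ hint k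
  exact ((intersectSimply_comp_equiv_iff (β j)).mpr quotient).symm

theorem statement5_general {h : Equiv.Perm X}
    (hinj : Function.Injective β) (hrange : Set.range β = (G : Set (Equiv.Perm X)))
    (hfree : ∀ g ∈ G, g ≠ 1 → ∀ x, g x ≠ x) (hint : ∀ i, IntersectSimply h (β i)) :
    IsPermPolyTuple (fun i => h * β i) ∧ AreCompanions β (fun i => h * β i) :=
  have hmem (i : ι) : β i ∈ G := hrange.subset (Set.mem_range_self i)
  ⟨(isPermPolyTuple_of_injective hfree hinj hmem).mul_left h, areCompanions_mul_left hrange hint⟩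

end Perm

/-- Lemma 2.6 (Lemma 4.4 of Hasan–Kumar): if `G = {β_0,…,β_{q−1}}` is a subgroup of `S_q`
of order `q` all of whose non-identity elements are fixed-point-free, and `h` intersects
each `β_i` simply, then `(hβ_0,…,hβ_{q−1})` is a permutation polynomial tuple and the
associated polynomial is a companion of the one associated with `(β_0,…,β_{q−1})`. -/
theorem statement5 {X : Type*} [Fintype X] (q : ℕ) (hq : IsPrimePow q)
    (hX : Fintype.card X = q)
    (G : Subgroup (Equiv.Perm X)) (β : Fin q → Equiv.Perm X)
    (hrange : Set.range β = (G : Set (Equiv.Perm X)))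
    (hcard : Nat.card G = q)
    (hfree : ∀ g ∈ G, g ≠ 1 → ∀ x : X, g x ≠ x)
    (h : Equiv.Perm X)
    (hint : ∀ i : Fin q, ∃! x : X, h x = β i x) :
    (∀ i j : Fin q, i ≠ j → ∀ x : X, ((h * β i) * (h * β j)⁻¹) x ≠ x) ∧
    (∀ i j : Fin q, ∃! x : X, β i x = h (β j x)) := by
  have hinj : Function.Injective β :=
    injective_of_natCard_le_natCard_range (by simp [hrange, hcard])
  exact statement5_general hinj hrange hfree hint
end

section
/- Let q be a prime power and let (β_0, β_1, …, β_{q−1}) be a q-tuple of permutations of a q-element set X such that G := {β_0, …, β_{q−1}} is a subgroup of the symmetric group S_q on X of order q in which every non-identity element has no fixed point. Then the number of q-tuples (γ_0, …, γ_{q−1}) of permutations of X such that {γ_0, …, γ_{q−1}} is a subgroup of S_q and there exist σ, λ ∈ S_q with γ_i = σ β_i λ for all 0 ≤ i ≤ q−1, equals q · q! / |C_{S_q}(G)|, where C_{S_q}(G) is the centralizer of G in S_q. -/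
/-!
If the tuple `σ * β i * lam` runs through a subgroup, one of its entries is `1`, so
`lam = g * σ⁻¹` with `g ∈ G`: the tuple is the conjugate by `σ` of the right translate of `β` by
`g`. Hence the tuples to be counted are those in the simultaneous conjugation orbits of the
translates of `β` by elements of `G`. These orbits are disjoint, since a conjugate of the translate
by `g` has the entry `1` exactly where `β` has the entry `g⁻¹`. All translates have range `G`, so
each has the centralizer of `G` as its stabilizer, and its orbit has size the index of that
centralizer.
-/

open MulAction MulOpposite

section Group

variable {A ι : Type*} [Group A]

theorem stabilizer_conjAct_pi (β : ι → A) :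
    stabilizer (ConjAct A) β =
      (Subgroup.centralizer (Set.range β)).comap
        (ConjAct.ofConjAct.toMonoidHom : ConjAct A →* A) := by
  ext σ
  rw [Subgroup.mem_comap, Subgroup.mem_centralizer_iff, Set.forall_mem_range, mem_stabilizer_iff,
    funext_iff]
  exact forall_congr' fun i => mul_inv_eq_iff_eq_mul.trans eq_comm

theorem toConjAct_smul_op_smul (σ g : A) (β : ι → A) :
    ConjAct.toConjAct σ • op g • β = fun i => σ * β i * (g * σ⁻¹) := by
  funext i
  simp [ConjAct.toConjAct_smul, mul_assoc]

variable {G : Subgroup A} {β : ι → A}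

theorem range_op_smul_eq_coe (hβ : Set.range β = G) {g : A} (hg : g ∈ G) :
    Set.range (op g • β) = G := by
  rw [← op_smul_coe_set hg, ← hβ]
  exact Set.range_smul (op g) β

theorem exists_subgroup_coe_eq_range_mul_mul_iff (hβ : Set.range β = G) (σ lam : A) :
    (∃ H : Subgroup A, (H : Set A) = Set.range fun i => σ * β i * lam) ↔ lam * σ ∈ G := by
  constructor
  · rintro ⟨H, hH⟩
    obtain ⟨j, hj⟩ : (1 : A) ∈ Set.range fun i => σ * β i * lam := hH ▸ H.one_mem
    have hinv : lam * σ = (β j)⁻¹ := by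
      rw [eq_inv_iff_mul_eq_one, mul_assoc]
      exact mul_eq_one_comm.mp hj
    have hmem : β j ∈ (G : Set A) := hβ ▸ Set.mem_range_self j
    exact hinv ▸ G.inv_mem hmem
  · intro hmem
    refine ⟨G.map (MulAut.conj σ).toMonoidHom, ?_⟩
    rw [Subgroup.coe_map, ← range_op_smul_eq_coe hβ hmem, ← Set.range_comp]
    refine congrArg Set.range (funext fun i => ?_)
    simp [mul_assoc]

theorem setOf_subgroup_mul_mul_eq_iUnion_orbit (hβ : Set.range β = G) :
    {γ : ι → A | (∃ H : Subgroup A, (H : Set A) = Set.range γ) ∧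
      ∃ σ lam : A, ∀ i, γ i = σ * β i * lam} =
    ⋃ g : G, orbit (ConjAct A) (op (g : A) • β) := by
  ext γ
  simp only [Set.mem_ofPred_eq, Set.mem_iUnion]
  constructor
  · rintro ⟨hH, σ, lam, hγ⟩
    obtain rfl : γ = fun i => σ * β i * lam := funext hγ
    refine ⟨⟨lam * σ, (exists_subgroup_coe_eq_range_mul_mul_iff hβ σ lam).mp hH⟩,
      ConjAct.toConjAct σ, ?_⟩
    exact (toConjAct_smul_op_smul σ (lam * σ) β).trans (by rw [mul_inv_cancel_right])
  · rintro ⟨g, σ, rfl⟩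
    obtain ⟨σ, rfl⟩ := ConjAct.toConjAct.surjective σ
    simp only [toConjAct_smul_op_smul]
    exact ⟨(exists_subgroup_coe_eq_range_mul_mul_iff hβ σ _).mpr (by simp), σ, _, fun _ => rfl⟩

theorem eq_one_iff_of_mem_orbit_op_smul {g : A} {γ : ι → A}
    (hγ : γ ∈ orbit (ConjAct A) (op g • β)) (i : ι) : γ i = 1 ↔ β i = g⁻¹ := by
  obtain ⟨σ, rfl⟩ := hγ
  rw [eq_inv_iff_mul_eq_one]
  exact (smul_eq_iff_eq_inv_smul σ).trans (by rw [smul_one]; rfl)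

theorem pairwise_disjoint_orbit_op_smul (hβ : Set.range β = G) :
    Pairwise (Function.onFun Disjoint fun g : G => orbit (ConjAct A) (op (g : A) • β)) := by
  refine fun g h hne => Set.disjoint_left.mpr fun γ hg hh => hne ?_
  obtain ⟨j, hj⟩ : (g : A)⁻¹ ∈ Set.range β := hβ ▸ G.inv_mem g.2
  have hentry : γ j = 1 := (eq_one_iff_of_mem_orbit_op_smul hg j).mpr hj
  have hinv : (g : A)⁻¹ = (h : A)⁻¹ :=
    hj.symm.trans ((eq_one_iff_of_mem_orbit_op_smul hh j).mp hentry)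
  exact Subtype.ext (inv_injective hinv)

theorem stabilizer_conjAct_op_smul (hβ : Set.range β = G) {g : A} (hg : g ∈ G) :
    stabilizer (ConjAct A) (op g • β) =
      (Subgroup.centralizer (G : Set A)).comap
        (ConjAct.ofConjAct.toMonoidHom : ConjAct A →* A) := by
  rw [stabilizer_conjAct_pi, range_op_smul_eq_coe hβ hg]

theorem card_iUnion_orbit_op_smul (hβ : Set.range β = G) :
    Nat.card (⋃ g : G, orbit (ConjAct A) (op (g : A) • β)) =
      Nat.card G * (Subgroup.centralizer (G : Set A)).index := by
  let K := (Subgroup.centralizer (G : Set A)).comap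
    (ConjAct.ofConjAct.toMonoidHom : ConjAct A →* A)
  have orbitEquiv (g : G) : orbit (ConjAct A) (op (g : A) • β) ≃ ConjAct A ⧸ K :=
    (orbitEquivQuotientStabilizer _ _).trans
      (Subgroup.quotientEquivOfEq (stabilizer_conjAct_op_smul hβ g.2))
  calc Nat.card (⋃ g : G, orbit (ConjAct A) (op (g : A) • β))
      = Nat.card (G × (ConjAct A ⧸ K)) :=
        Nat.card_congr ((Set.unionEqSigmaOfDisjoint (pairwise_disjoint_orbit_op_smul hβ)).trans
          (Equiv.sigmaEquivProdOfEquiv orbitEquiv))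
    _ = Nat.card G * K.index := Nat.card_prod _ _
    _ = Nat.card G * (Subgroup.centralizer (G : Set A)).index := by
        rw [Subgroup.index_comap_of_surjective _ ConjAct.ofConjAct.surjective]

theorem statement11_general (hβ : Set.range β = G) :
    Nat.card {γ : ι → A // (∃ H : Subgroup A, (H : Set A) = Set.range γ) ∧
      ∃ σ lam : A, ∀ i, γ i = σ * β i * lam} =
    Nat.card G * (Subgroup.centralizer (G : Set A)).index :=
  (Nat.card_congr (Equiv.setCongr (setOf_subgroup_mul_mul_eq_iUnion_orbit hβ))).trans
    (card_iUnion_orbit_op_smul hβ)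

theorem mul_card_div_card_subgroup [Finite A] (n : ℕ) (H : Subgroup A) :
    n * Nat.card A / Nat.card H = n * H.index := by
  rw [← H.card_mul_index, mul_left_comm, Nat.mul_div_cancel_left _ Nat.card_pos]

end Group

/-- Theorem 4.5: if `G = {β_0,…,β_{q−1}}` is a subgroup of `S_q` of order `q` all of whose
non-identity elements are fixed-point-free, then the number of `q`-tuples `(γ_0,…,γ_{q−1})`
whose entries form a subgroup of `S_q` and which are equivalent to `(β_0,…,β_{q−1})`
(i.e. `γ_i = σ β_i λ` for some fixed `σ, λ`) equals `q·q!/|C_{S_q}(G)|`. -/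
theorem statement11 {X : Type*} [Fintype X] (q : ℕ) (hq : IsPrimePow q)
    (hX : Fintype.card X = q)
    (G : Subgroup (Equiv.Perm X)) (β : Fin q → Equiv.Perm X)
    (hrange : Set.range β = (G : Set (Equiv.Perm X)))
    (hcard : Nat.card G = q)
    (hfree : ∀ g ∈ G, g ≠ 1 → ∀ x : X, g x ≠ x) :
    Nat.card {γ : Fin q → Equiv.Perm X //
      (∃ H : Subgroup (Equiv.Perm X), (H : Set (Equiv.Perm X)) = Set.range γ) ∧
      ∃ σ lam : Equiv.Perm X, ∀ i : Fin q, γ i = σ * β i * lam} =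
    q * Nat.factorial q / Nat.card (Subgroup.centralizer (G : Set (Equiv.Perm X))) := by
  rw [statement11_general hrange, hcard, ← mul_card_div_card_subgroup, Nat.card_perm,
    Nat.card_eq_fintype_card, hX]
end

section
/- Let p be a prime, n ≥ 2 an integer, q = p^n, and let e be an integer with 1 ≤ e < n/2. Then the number of q-tuples (β_0, β_1, …, β_{q−1}) of permutations of {0,…,p^n−1} such that β_i β_j^{−1} has no fixed point for all i ≠ j and the set {β_0, …, β_{q−1}} is a subgroup of S_q isomorphic to Z_{p^e} × Z_{p^{n−e}} equals (p^n)! · (p^n − 1)! / ( p^{2e} · φ(p^e) · φ(p^{n−e}) ), where φ denotes Euler's totient function. -/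
/-!
Let `G` be a finite group and `X` a set with `|G|` points. A tuple of permutations of `X` whose
entries form a group isomorphic to `G`, with pairwise fixed-point-free quotients, is `ρ ∘ σ` for a
regular representation `ρ` of `G` on `X` and a bijection `σ` from the index set to `G`, and the pair
`(ρ, σ)` is unique up to an automorphism of `G`. A regular representation with a base point is a
labelling of `X` by `G`, so there are `(|G| - 1)!` representations `ρ`, and the number of tuples is
`|G|! * (|G| - 1)! / |Aut G|`.

Let `G = ZMod m × ZMod N`, where no prime divides `m` and `N` to the same positive power. Every
composite `ZMod m → ZMod N → ZMod m` is then nilpotent, so a `2 × 2` matrix of homomorphisms is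
invertible if and only if its diagonal entries are. The diagonal contributes `φ(m) * φ(N)` to
`|Aut G|` and each off-diagonal entry contributes `gcd(m, N)`.
-/

theorem card_equiv_of_card_eq {α β : Type*} [Finite α] [Finite β] (h : Nat.card α = Nat.card β) :
    Nat.card (α ≃ β) = (Nat.card α).factorial := by
  obtain ⟨e⟩ := Finite.card_eq.mp h
  rw [Nat.card_congr ((Equiv.refl α).equivCongr e.symm), Nat.card_perm]

section GroupTuples

variable {G ι X : Type*} [Group G]

/-- A permutation representation is semiregular when only the identity acts with a fixed point.
If moreover `G` and `X` have the same finite cardinality, the action is simply transitive, so these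
are the regular permutation representations. -/
def IsSemiregular (ρ : G →* Equiv.Perm X) : Prop :=
  ∀ g x, ρ g x = x → g = 1

theorem IsSemiregular.injective_apply {ρ : G →* Equiv.Perm X} (hρ : IsSemiregular ρ) (x : X) :
    Function.Injective fun g => ρ g x := by
  intro g h hgh
  have hfix : ρ (h⁻¹ * g) x = x := by
    rw [map_mul, Equiv.Perm.mul_apply, map_inv, Equiv.Perm.inv_eq_iff_eq]
    exact hgh
  exact (inv_mul_eq_one.mp (hρ _ x hfix)).symm

theorem IsSemiregular.injective [Nonempty X] {ρ : G →* Equiv.Perm X} (hρ : IsSemiregular ρ) :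
    Function.Injective ρ := fun _ _ hgh =>
  hρ.injective_apply (Classical.arbitrary X) (congrArg (· (Classical.arbitrary X)) hgh)

theorem IsSemiregular.bijective_apply [Finite X] (hX : Nat.card G = Nat.card X)
    {ρ : G →* Equiv.Perm X} (hρ : IsSemiregular ρ) (x : X) :
    Function.Bijective fun g => ρ g x :=
  (hρ.injective_apply x).bijective_of_nat_card_le hX.ge

theorem IsSemiregular.comp_mulEquiv {ρ : G →* Equiv.Perm X} (hρ : IsSemiregular ρ) (α : MulAut G) :
    IsSemiregular (ρ.comp α.toMonoidHom) :=
  fun g x h => α.map_eq_one_iff.mp (hρ (α g) x h)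

/-- The left regular representation of `G`, transported to `X` along a labelling `b` of the points
of `X` by the elements of `G`. -/
def transportedLeftRegular (b : G ≃ X) : G →* Equiv.Perm X :=
  b.permCongrHom.toMonoidHom.comp (MulAction.toPermHom G G)

theorem transportedLeftRegular_apply (b : G ≃ X) (g : G) (x : X) :
    transportedLeftRegular b g x = b (g * b.symm x) :=
  rfl

theorem isSemiregular_transportedLeftRegular (b : G ≃ X) :
    IsSemiregular (transportedLeftRegular b) := by
  intro g x h
  rw [transportedLeftRegular_apply, ← Equiv.eq_symm_apply] at h
  exact mul_eq_right.mp h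

theorem transportedLeftRegular_ofBijective {ρ : G →* Equiv.Perm X} {x : X}
    (h : Function.Bijective fun g => ρ g x) :
    transportedLeftRegular (Equiv.ofBijective _ h) = ρ := by
  ext g y
  obtain ⟨k, rfl⟩ := h.surjective y
  have hk : (Equiv.ofBijective _ h).symm (ρ k x) = k := Equiv.ofBijective_symm_apply_apply _ h k
  simp only [transportedLeftRegular_apply, hk, Equiv.ofBijective_apply, map_mul,
    Equiv.Perm.mul_apply]

/-- A regular representation together with a base point `x` is the same thing as the labelling
`g ↦ ρ g x` of the points by the group. -/
noncomputable def semiregularProdEquiv [Finite X] (hX : Nat.card G = Nat.card X) :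
    {ρ : G →* Equiv.Perm X // IsSemiregular ρ} × X ≃ (G ≃ X) where
  toFun z := Equiv.ofBijective _ (z.1.2.bijective_apply hX z.2)
  invFun b := (⟨transportedLeftRegular b, isSemiregular_transportedLeftRegular b⟩, b 1)
  left_inv z := by
    refine Prod.ext (Subtype.ext (transportedLeftRegular_ofBijective _)) ?_
    simp only [Equiv.ofBijective_apply, map_one, Equiv.Perm.one_apply]
  right_inv b := by
    ext g
    simp [transportedLeftRegular_apply]

theorem card_semiregular [Finite G] (hX : Nat.card G = Nat.card X) :
    Nat.card {ρ : G →* Equiv.Perm X // IsSemiregular ρ} = (Nat.card G - 1).factorial := by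
  have : Finite X := Nat.finite_of_card_ne_zero (hX ▸ Nat.card_pos.ne')
  have hcard := Nat.card_congr (semiregularProdEquiv hX)
  rw [Nat.card_prod, ← hX, card_equiv_of_card_eq hX, ← Nat.mul_factorial_pred Nat.card_pos.ne',
    mul_comm] at hcard
  exact Nat.eq_of_mul_eq_mul_left Nat.card_pos hcard

/-- A tuple of permutations indexed by `ι` such that `β i * (β j)⁻¹` is fixed-point free for
`i ≠ j` and whose entries form a group isomorphic to `G`. -/
def IsGroupTuple (G : Type*) [Group G] (β : ι → Equiv.Perm X) : Prop :=
  (∀ i j, i ≠ j → ∀ x, (β i * (β j)⁻¹) x ≠ x) ∧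
    ∃ H : Subgroup (Equiv.Perm X), (H : Set (Equiv.Perm X)) = Set.range β ∧ Nonempty (H ≃* G)

theorem IsSemiregular.isGroupTuple_comp [Nonempty X] {ρ : G →* Equiv.Perm X}
    (hρ : IsSemiregular ρ) (σ : ι ≃ G) : IsGroupTuple G (ρ ∘ σ) := by
  refine ⟨fun i j hij x hfix => hij ?_, ρ.range, ?_, ⟨(ρ.ofInjective hρ.injective).symm⟩⟩
  · rw [Function.comp_apply, Function.comp_apply, ← map_inv, ← map_mul] at hfix
    exact σ.injective (mul_inv_eq_one.mp (hρ _ x hfix))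
  · rw [MonoidHom.coe_range, σ.surjective.range_comp]

theorem IsGroupTuple.injective [Nonempty X] {β : ι → Equiv.Perm X} (hβ : IsGroupTuple G β) :
    Function.Injective β := by
  intro i j hij
  by_contra hne
  exact hβ.1 i j hne (Classical.arbitrary X) (by rw [hij, mul_inv_cancel, Equiv.Perm.one_apply])

theorem IsGroupTuple.exists_isSemiregular_comp [Nonempty X] {β : ι → Equiv.Perm X}
    (hβ : IsGroupTuple G β) :
    ∃ (ρ : G →* Equiv.Perm X) (σ : ι ≃ G), IsSemiregular ρ ∧ ρ ∘ σ = β := by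
  obtain ⟨H, hH, ⟨ψ⟩⟩ := hβ.2
  let σ : ι ≃ G := ((Equiv.ofInjective β hβ.injective).trans (Equiv.setCongr hH.symm)).trans ψ
  let ρ : G →* Equiv.Perm X := H.subtype.comp ψ.symm.toMonoidHom
  have hσ : ρ ∘ σ = β := by
    ext1 i
    exact congrArg Subtype.val (ψ.symm_apply_apply _)
  refine ⟨ρ, σ, fun g x hfix => ?_, hσ⟩
  obtain ⟨i, rfl⟩ := σ.surjective g
  obtain ⟨j, hj⟩ := σ.surjective 1
  by_contra hne
  refine hβ.1 i j (fun hij => hne (hij ▸ hj)) x ?_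
  rwa [← hσ, Function.comp_apply, Function.comp_apply, hj, map_one, inv_one, mul_one]

/-- The map `(ρ, σ) ↦ ρ ∘ σ` that lists the image of a semiregular representation `ρ` in the order
prescribed by `σ`. -/
def groupTupleOfPair [Nonempty X]
    (z : {ρ : G →* Equiv.Perm X // IsSemiregular ρ} × (ι ≃ G)) :
    {β : ι → Equiv.Perm X // IsGroupTuple G β} :=
  ⟨z.1.1 ∘ z.2, z.1.2.isGroupTuple_comp z.2⟩

theorem exists_mulAut_of_comp_eq_comp [Nonempty X] {ρ ρ' : G →* Equiv.Perm X}
    (hρ : IsSemiregular ρ) {σ σ' : ι ≃ G} (h : ρ ∘ σ = ρ' ∘ σ') :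
    ∃ α : MulAut G, ρ.comp α.toMonoidHom = ρ' ∧ σ'.trans α.toEquiv = σ := by
  have hα : ∀ g, ρ (σ (σ'.symm g)) = ρ' g := fun g => by
    simpa using congrFun h (σ'.symm g)
  let α : MulAut G := MulEquiv.mk' (σ'.symm.trans σ) fun g g' => hρ.injective <| by
    simp only [Equiv.trans_apply, map_mul, hα]
  refine ⟨α, MonoidHom.ext hα, ?_⟩
  ext1 i
  exact congrArg σ (σ'.symm_apply_apply i)

theorem nonempty_mulAut_equiv_fiber_groupTupleOfPair [Nonempty X]
    (β : {β : ι → Equiv.Perm X // IsGroupTuple G β}) :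
    Nonempty (MulAut G ≃ {z // groupTupleOfPair z = β}) := by
  obtain ⟨ρ, σ, hρ, hσ⟩ := β.2.exists_isSemiregular_comp
  let f (α : MulAut G) : {z // groupTupleOfPair z = β} :=
    ⟨(⟨ρ.comp α.toMonoidHom, hρ.comp_mulEquiv α⟩, σ.trans α.symm.toEquiv),
      Subtype.ext <| by
        ext1 i
        simp [groupTupleOfPair, ← hσ]⟩
  refine ⟨Equiv.ofBijective f ⟨fun α α' h => ?_, fun ⟨⟨⟨ρ', hρ'⟩, σ'⟩, hz⟩ => ?_⟩⟩
  · have hcomp : ρ.comp α.toMonoidHom = ρ.comp α'.toMonoidHom := congrArg (fun z => z.1.1.1) h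
    ext g
    exact hρ.injective (DFunLike.congr_fun hcomp g)
  · have hz' : ρ' ∘ σ' = β.1 := congrArg Subtype.val hz
    obtain ⟨α, rfl, rfl⟩ := exists_mulAut_of_comp_eq_comp hρ (hσ.trans hz'.symm)
    refine ⟨α, Subtype.ext (Prod.ext rfl ?_)⟩
    ext1 i
    exact α.symm_apply_apply (σ' i)

theorem card_isGroupTuple_mul_card_mulAut [Finite G]
    (hι : Nat.card ι = Nat.card G) (hX : Nat.card G = Nat.card X) :
    Nat.card {β : ι → Equiv.Perm X // IsGroupTuple G β} * Nat.card (MulAut G) =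
      (Nat.card G).factorial * (Nat.card G - 1).factorial := by
  have : Nonempty X := (Nat.card_pos_iff.mp (hX ▸ Nat.card_pos)).1
  have : Finite ι := Nat.finite_of_card_ne_zero (hι ▸ Nat.card_pos.ne')
  let e : {ρ : G →* Equiv.Perm X // IsSemiregular ρ} × (ι ≃ G) ≃
      {β : ι → Equiv.Perm X // IsGroupTuple G β} × MulAut G :=
    (Equiv.sigmaFiberEquiv groupTupleOfPair).symm.trans <|
      (Equiv.sigmaCongrRight fun β =>
        (nonempty_mulAut_equiv_fiber_groupTupleOfPair β).some.symm).trans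
      (Equiv.sigmaEquivProd _ _)
  rw [← Nat.card_prod, ← Nat.card_congr e, Nat.card_prod, card_semiregular hX,
    card_equiv_of_card_eq hι, hι, mul_comm]

end GroupTuples

section BlockEndomorphisms

variable {R M N : Type*} [Ring R] [AddCommGroup M] [AddCommGroup N] [Module R M] [Module R N]

theorem isNilpotent_linearMap_comp_comm {β : N →ₗ[R] M} {γ : M →ₗ[R] N}
    (h : IsNilpotent (β ∘ₗ γ : Module.End R M)) : IsNilpotent (γ ∘ₗ β : Module.End R N) := by
  obtain ⟨k, hk⟩ := h
  refine ⟨k + 1, ?_⟩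
  have hcomm : ((γ ∘ₗ β : Module.End R N) ^ k) ∘ₗ γ = γ ∘ₗ (β ∘ₗ γ : Module.End R M) ^ k :=
    Module.End.commute_pow_left_of_commute (f := γ) (g := β ∘ₗ γ) (g₂ := γ ∘ₗ β)
      (LinearMap.comp_assoc _ _ _) k
  rw [pow_succ, Module.End.mul_eq_comp, ← LinearMap.comp_assoc, hcomm, hk, LinearMap.comp_zero,
    LinearMap.zero_comp]

theorem isNilpotent_linearMap_prodMap {f : Module.End R M} {g : Module.End R N}
    (hf : IsNilpotent f) (hg : IsNilpotent g) :
    IsNilpotent (f.prodMap g : Module.End R (M × N)) := by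
  obtain ⟨k, hk⟩ := hf
  obtain ⟨l, hl⟩ := hg
  have hfg : IsNilpotent (f, g) := by
    refine ⟨k + l, ?_⟩
    rw [Prod.pow_mk, pow_add, hk, zero_mul, pow_add, hl, mul_zero, Prod.mk_zero_zero]
  exact hfg.map (LinearMap.prodMapRingHom R M N)

/-- The endomorphism of `M × N` with block matrix `(α, β; γ, δ)`. -/
def blockEnd (α : Module.End R M) (β : N →ₗ[R] M) (γ : M →ₗ[R] N) (δ : Module.End R N) :
    Module.End R (M × N) :=
  (α.coprod β).prod (γ.coprod δ)

theorem blockEnd_apply (α : Module.End R M) (β : N →ₗ[R] M) (γ : M →ₗ[R] N) (δ : Module.End R N)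
    (x : M × N) : blockEnd α β γ δ x = (α x.1 + β x.2, γ x.1 + δ x.2) :=
  rfl

theorem blockEnd_mul (α α' : Module.End R M) (β β' : N →ₗ[R] M) (γ γ' : M →ₗ[R] N)
    (δ δ' : Module.End R N) :
    blockEnd α β γ δ * blockEnd α' β' γ' δ' =
      blockEnd (α * α' + β ∘ₗ γ') (α ∘ₗ β' + β ∘ₗ δ') (γ ∘ₗ α' + δ ∘ₗ γ') (γ ∘ₗ β' + δ * δ') := by
  ext <;> simp [blockEnd_apply]

theorem blockEnd_one : blockEnd (1 : Module.End R M) 0 0 (1 : Module.End R N) = 1 := by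
  ext <;> simp [blockEnd_apply]

theorem isUnit_blockEnd_diagonal {α : Module.End R M} {δ : Module.End R N} (hα : IsUnit α)
    (hδ : IsUnit δ) : IsUnit (blockEnd α 0 0 δ) := by
  have hprod : blockEnd α 0 0 δ = LinearMap.prodMapRingHom R M N (α, δ) := by
    ext <;> simp [blockEnd_apply]
  exact hprod ▸ (Prod.isUnit_iff (x := (α, δ)).mpr ⟨hα, hδ⟩).map (LinearMap.prodMapRingHom R M N)

theorem isUnit_blockEnd_one {β : N →ₗ[R] M} {γ : M →ₗ[R] N}
    (h : IsNilpotent (β ∘ₗ γ : Module.End R M)) : IsUnit (blockEnd 1 β γ 1) := by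
  have hsq : blockEnd 0 β γ 0 ^ 2 = LinearMap.prodMap (β ∘ₗ γ) (γ ∘ₗ β) := by
    ext <;> simp [sq, blockEnd_apply]
  have hnil : IsNilpotent (blockEnd 0 β γ 0) := .of_pow (m := 2) <|
    hsq ▸ isNilpotent_linearMap_prodMap h (isNilpotent_linearMap_comp_comm h)
  have hadd : blockEnd 1 β γ 1 = 1 + blockEnd 0 β γ 0 := by
    ext <;> simp [blockEnd_apply]
  exact hadd ▸ hnil.isUnit_one_add

theorem isUnit_blockEnd
    (hnil : ∀ (β : N →ₗ[R] M) (γ : M →ₗ[R] N), IsNilpotent (β ∘ₗ γ : Module.End R M))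
    {α : Module.End R M} {δ : Module.End R N} (hα : IsUnit α) (hδ : IsUnit δ)
    (β : N →ₗ[R] M) (γ : M →ₗ[R] N) : IsUnit (blockEnd α β γ δ) := by
  obtain ⟨a, rfl⟩ := hα
  obtain ⟨d, rfl⟩ := hδ
  have hfactor : blockEnd ↑a β γ ↑d =
      blockEnd ↑a 0 0 ↑d * blockEnd 1 (↑a⁻¹ ∘ₗ β) (↑d⁻¹ ∘ₗ γ) 1 := by
    have hβ : β = ↑a ∘ₗ (↑a⁻¹ : Module.End R M) ∘ₗ β := by
      rw [← LinearMap.comp_assoc, ← Module.End.mul_eq_comp, a.mul_inv,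
        Module.End.one_eq_id, LinearMap.id_comp]
    have hγ : γ = ↑d ∘ₗ (↑d⁻¹ : Module.End R N) ∘ₗ γ := by
      rw [← LinearMap.comp_assoc, ← Module.End.mul_eq_comp, d.mul_inv,
        Module.End.one_eq_id, LinearMap.id_comp]
    simp only [blockEnd_mul, mul_one, LinearMap.zero_comp, add_zero, zero_add, ← hβ, ← hγ]
  rw [hfactor]
  exact (isUnit_blockEnd_diagonal a.isUnit d.isUnit).mul (isUnit_blockEnd_one (hnil _ _))

theorem isUnit_of_isUnit_mul_of_isUnit_mul {S : Type*} [Monoid S] {a b c : S}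
    (hab : IsUnit (a * b)) (hca : IsUnit (c * a)) : IsUnit a := by
  obtain ⟨u, hu⟩ := hab.exists_right_inv
  obtain ⟨v, hv⟩ := hca.exists_left_inv
  exact isUnit_iff_exists_and_exists.mpr ⟨⟨b * u, by rw [← mul_assoc, hu]⟩,
    ⟨v * c, by rw [mul_assoc, hv]⟩⟩

/-- The entries of a block matrix, grouped by rows with the diagonal entry first, as coordinates on
the endomorphisms of `M × N`. -/
def blockEndEquiv :
    (Module.End R M × (N →ₗ[R] M)) × (Module.End R N × (M →ₗ[R] N)) ≃ Module.End R (M × N) :=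
  ((LinearMap.coprodEquiv ℕ).toEquiv.prodCongr
    ((Equiv.prodComm _ _).trans (LinearMap.coprodEquiv ℕ).toEquiv)).trans
    (LinearMap.prodEquiv ℕ).toEquiv

theorem blockEndEquiv_apply (α : Module.End R M) (β : N →ₗ[R] M) (γ : M →ₗ[R] N)
    (δ : Module.End R N) : blockEndEquiv ((α, β), (δ, γ)) = blockEnd α β γ δ :=
  rfl

theorem isUnit_diagonal_of_isUnit_blockEnd
    (hnil : ∀ (β : N →ₗ[R] M) (γ : M →ₗ[R] N), IsNilpotent (β ∘ₗ γ : Module.End R M))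
    {α : Module.End R M} {β : N →ₗ[R] M} {γ : M →ₗ[R] N} {δ : Module.End R N}
    (h : IsUnit (blockEnd α β γ δ)) : IsUnit α ∧ IsUnit δ := by
  obtain ⟨v, hright, hleft⟩ := isUnit_iff_exists.mp h
  obtain ⟨⟨⟨α', β'⟩, δ', γ'⟩, rfl⟩ := blockEndEquiv.surjective v
  rw [blockEndEquiv_apply, blockEnd_mul, ← blockEnd_one, ← blockEndEquiv_apply,
    ← blockEndEquiv_apply, blockEndEquiv.injective.eq_iff, Prod.mk.injEq, Prod.mk.injEq,
    Prod.mk.injEq] at hright hleft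
  obtain ⟨⟨hαα', -⟩, hδδ', -⟩ := hright
  obtain ⟨⟨hα'α, -⟩, hδ'δ, -⟩ := hleft
  have hcomm (β : N →ₗ[R] M) (γ : M →ₗ[R] N) := isNilpotent_linearMap_comp_comm (hnil β γ)
  constructor
  · refine isUnit_of_isUnit_mul_of_isUnit_mul (b := α') (c := α') ?_ ?_
    · exact eq_sub_of_add_eq hαα' ▸ (hnil _ _).isUnit_one_sub
    · exact eq_sub_of_add_eq hα'α ▸ (hnil _ _).isUnit_one_sub
  · refine isUnit_of_isUnit_mul_of_isUnit_mul (b := δ') (c := δ') ?_ ?_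
    · exact eq_sub_of_add_eq' hδδ' ▸ (hcomm _ _).isUnit_one_sub
    · exact eq_sub_of_add_eq' hδ'δ ▸ (hcomm _ _).isUnit_one_sub

theorem isUnit_blockEnd_iff
    (hnil : ∀ (β : N →ₗ[R] M) (γ : M →ₗ[R] N), IsNilpotent (β ∘ₗ γ : Module.End R M))
    {α : Module.End R M} {β : N →ₗ[R] M} {γ : M →ₗ[R] N} {δ : Module.End R N} :
    IsUnit (blockEnd α β γ δ) ↔ IsUnit α ∧ IsUnit δ :=
  ⟨isUnit_diagonal_of_isUnit_blockEnd hnil, fun h => isUnit_blockEnd hnil h.1 h.2 β γ⟩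

theorem card_linearEquiv_eq_card_isUnit (P : Type*) [AddCommGroup P] [Module R P] :
    Nat.card (P ≃ₗ[R] P) = Nat.card {f : Module.End R P // IsUnit f} :=
  Nat.card_congr ((LinearMap.GeneralLinearGroup.generalLinearEquiv R P).symm.toEquiv.trans
    Submonoid.unitsTypeEquivIsUnitSubmonoid.toEquiv)

theorem card_linearEquiv_prod
    (hnil : ∀ (β : N →ₗ[R] M) (γ : M →ₗ[R] N), IsNilpotent (β ∘ₗ γ : Module.End R M)) :
    Nat.card ((M × N) ≃ₗ[R] (M × N)) =
      Nat.card (M ≃ₗ[R] M) * Nat.card (N →ₗ[R] M) *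
        (Nat.card (N ≃ₗ[R] N) * Nat.card (M →ₗ[R] N)) := by
  have hunit (w : (Module.End R M × (N →ₗ[R] M)) × (Module.End R N × (M →ₗ[R] N))) :
      IsUnit w.1.1 ∧ IsUnit w.2.1 ↔ IsUnit (blockEndEquiv w) :=
    (isUnit_blockEnd_iff hnil).symm
  have e : {f : Module.End R (M × N) // IsUnit f} ≃
      ({α : Module.End R M // IsUnit α} × (N →ₗ[R] M)) ×
        ({δ : Module.End R N // IsUnit δ} × (M →ₗ[R] N)) :=
    (blockEndEquiv.subtypeEquiv hunit).symm.trans <|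
      (Equiv.subtypeProdEquivProd (p := fun r : Module.End R M × (N →ₗ[R] M) => IsUnit r.1)
        (q := fun r : Module.End R N × (M →ₗ[R] N) => IsUnit r.1)).trans <|
        Equiv.prodSubtypeFstEquivSubtypeProd.prodCongr Equiv.prodSubtypeFstEquivSubtypeProd
  simp only [card_linearEquiv_eq_card_isUnit, Nat.card_congr e, Nat.card_prod]

end BlockEndomorphisms

section CyclicGroups

/-- A homomorphism out of `ZMod m` is determined by the image of `1`, which can be any element
killed by `m`. -/
def zmodHomEquivKer (m : ℕ) (A : Type*) [AddCommGroup A] :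
    (ZMod m →+ A) ≃ (nsmulAddMonoidHom m : A →+ A).ker :=
  (ZMod.lift m).symm.trans <| (zmultiplesHom A).symm.subtypeEquiv fun f => by
    rw [AddMonoidHom.mem_ker, nsmulAddMonoidHom_apply, zmultiplesHom_symm_apply, ← map_nsmul,
      nsmul_one]

theorem card_zmod_addMonoidHom (m : ℕ) (A : Type*) [AddCommGroup A] [IsAddCyclic A] [Finite A] :
    Nat.card (ZMod m →+ A) = (Nat.card A).gcd m := by
  rw [Nat.card_congr (zmodHomEquivKer m A), IsAddCyclic.card_nsmulAddMonoidHom_ker]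

theorem card_addAut_zmod (m : ℕ) [NeZero m] : Nat.card (ZMod m ≃+ ZMod m) = m.totient := by
  rw [← ZMod.card_units_eq_totient, ← Nat.card_eq_fintype_card]
  exact Nat.card_congr ((ZMod.AddAutEquivUnits m).toEquiv.trans Additive.toMul)

theorem natCast_div_gcd_dvd_apply_one {m N : ℕ} [NeZero N] (f : ZMod m →+ ZMod N) :
    ((N / N.gcd m : ℕ) : ZMod N) ∣ f 1 := by
  have hann : ((m * (f 1).val : ℕ) : ZMod N) = 0 := by
    rw [Nat.cast_mul, ZMod.natCast_zmod_val, ← nsmul_eq_mul, ← map_nsmul, nsmul_one,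
      ZMod.natCast_self, map_zero]
  rw [ZMod.natCast_eq_zero_iff, ← Nat.dvd_gcd_mul_iff_dvd_mul] at hann
  rw [← ZMod.natCast_zmod_val (f 1)]
  refine Nat.cast_dvd_cast ?_
  rw [← Nat.mul_dvd_mul_iff_left (Nat.gcd_pos_of_pos_left m (NeZero.pos N)),
    Nat.mul_div_cancel' (Nat.gcd_dvd_left N m)]
  exact hann

theorem natCast_div_gcd_mul_div_gcd_dvd {m N : ℕ} [NeZero m] [NeZero N] (β : ZMod N →+ ZMod m)
    (γ : ZMod m →+ ZMod N) :
    ((m / m.gcd N * (N / N.gcd m) : ℕ) : ZMod m) ∣ β (γ 1) := by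
  obtain ⟨y, hy⟩ := natCast_div_gcd_dvd_apply_one γ
  have hβ : β y = y.val * β 1 := by
    rw [← nsmul_eq_mul, ← map_nsmul, nsmul_one, ZMod.natCast_zmod_val]
  rw [hy, ← nsmul_eq_mul, map_nsmul, nsmul_eq_mul, hβ, mul_comm (m / _), Nat.cast_mul]
  exact mul_dvd_mul_left _ ((natCast_div_gcd_dvd_apply_one β).mul_left _)

theorem isNilpotent_natCast_iff {m k : ℕ} (hm : m ≠ 0) (hk : k ≠ 0) :
    IsNilpotent (k : ZMod m) ↔ m.primeFactors ⊆ k.primeFactors := by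
  simp_rw [IsNilpotent, ← Nat.cast_pow, ZMod.natCast_eq_zero_iff, Nat.exists_dvd_pow_iff hm hk]

theorem mem_primeFactors_div_gcd {m N q : ℕ} (hm : m ≠ 0)
    (hlt : m.factorization q < N.factorization q) : q ∈ (N / N.gcd m).primeFactors := by
  have hgcd : (N.gcd m).factorization q ≤ m.factorization q :=
    (Nat.factorization_le_iff_dvd (Nat.gcd_ne_zero_right hm) hm).mpr (Nat.gcd_dvd_right N m) q
  rw [← Nat.support_factorization, Finsupp.mem_support_iff,
    Nat.factorization_div (Nat.gcd_dvd_left N m), Finsupp.tsub_apply]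
  exact Nat.sub_ne_zero_of_lt (hgcd.trans_lt hlt)

theorem isNilpotent_natCast_div_gcd_mul_div_gcd {m N : ℕ} [NeZero m] [NeZero N]
    (h : ∀ q ∈ m.primeFactors, m.factorization q ≠ N.factorization q) :
    IsNilpotent ((m / m.gcd N * (N / N.gcd m) : ℕ) : ZMod m) := by
  have hm : m / m.gcd N ≠ 0 :=
    Nat.div_ne_zero_iff_of_dvd (Nat.gcd_dvd_left m N) |>.mpr
      ⟨NeZero.ne m, Nat.gcd_ne_zero_left (NeZero.ne m)⟩
  have hN : N / N.gcd m ≠ 0 :=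
    Nat.div_ne_zero_iff_of_dvd (Nat.gcd_dvd_left N m) |>.mpr
      ⟨NeZero.ne N, Nat.gcd_ne_zero_left (NeZero.ne N)⟩
  rw [isNilpotent_natCast_iff (NeZero.ne m) (mul_ne_zero hm hN), Nat.primeFactors_mul hm hN]
  intro q hq
  rcases (h q hq).lt_or_gt with hlt | hgt
  · exact Finset.mem_union_right _ (mem_primeFactors_div_gcd (NeZero.ne m) hlt)
  · exact Finset.mem_union_left _ (mem_primeFactors_div_gcd (NeZero.ne N) hgt)

theorem isNilpotent_comp_zmod {m N : ℕ} [NeZero m] [NeZero N]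
    (h : ∀ q ∈ m.primeFactors, m.factorization q ≠ N.factorization q)
    (β : ZMod N →ₗ[ℤ] ZMod m) (γ : ZMod m →ₗ[ℤ] ZMod N) :
    IsNilpotent (β ∘ₗ γ : Module.End ℤ (ZMod m)) := by
  have hmul : β ∘ₗ γ = LinearMap.mulLeft ℤ (β (γ 1)) := by
    ext1 x
    have hsmul := ZMod.map_smul (β ∘ₗ γ) x 1
    rwa [smul_eq_mul, mul_one, smul_eq_mul, mul_comm x] at hsmul
  have hnil : IsNilpotent (β (γ 1)) := by
    obtain ⟨y, hy⟩ := natCast_div_gcd_mul_div_gcd_dvd β.toAddMonoidHom γ.toAddMonoidHom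
    change β (γ 1) = _ at hy
    exact hy ▸ (Commute.all _ _).isNilpotent_mul_right
      (isNilpotent_natCast_div_gcd_mul_div_gcd h)
  exact hmul ▸ hnil.map (Algebra.lmul ℤ (ZMod m))

theorem card_addEquiv_eq_card_linearEquiv_int (A : Type*) [AddCommGroup A] :
    Nat.card (A ≃+ A) = Nat.card (A ≃ₗ[ℤ] A) :=
  Nat.card_congr
    { toFun := AddEquiv.toIntLinearEquiv
      invFun := LinearEquiv.toAddEquiv
      left_inv := AddEquiv.toIntLinearEquiv_toAddEquiv
      right_inv := LinearEquiv.toAddEquiv_toIntLinearEquiv }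

theorem card_addAut_zmod_prod {m N : ℕ} [NeZero m] [NeZero N]
    (h : ∀ q ∈ m.primeFactors, m.factorization q ≠ N.factorization q) :
    Nat.card ((ZMod m × ZMod N) ≃+ (ZMod m × ZMod N)) =
      m.gcd N ^ 2 * m.totient * N.totient := by
  have hhom (k l : ℕ) [NeZero l] : Nat.card (ZMod k →ₗ[ℤ] ZMod l) = l.gcd k := by
    rw [← Nat.card_congr (addMonoidHomLequivInt ℤ).toEquiv, card_zmod_addMonoidHom, Nat.card_zmod]
  rw [card_addEquiv_eq_card_linearEquiv_int, card_linearEquiv_prod (isNilpotent_comp_zmod h),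
    ← card_addEquiv_eq_card_linearEquiv_int, ← card_addEquiv_eq_card_linearEquiv_int,
    card_addAut_zmod, card_addAut_zmod, hhom, hhom, N.gcd_comm m]
  ring

theorem factorization_pow_ne_factorization_pow {p a b : ℕ} (hp : p.Prime) (hab : a ≠ b) :
    ∀ q ∈ (p ^ a).primeFactors, (p ^ a).factorization q ≠ (p ^ b).factorization q := by
  intro q hq
  obtain rfl : q = p := (Nat.prime_dvd_prime_iff_eq (Nat.prime_of_mem_primeFactors hq) hp).mp
    ((Nat.prime_of_mem_primeFactors hq).dvd_of_dvd_pow (Nat.dvd_of_mem_primeFactors hq))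
  rwa [hp.factorization_pow, hp.factorization_pow, Finsupp.single_eq_same,
    Finsupp.single_eq_same]

end CyclicGroups

theorem statement16_general {X : Type*} {m N : ℕ} [NeZero m] [NeZero N] (hX : Nat.card X = m * N)
    (h : ∀ q ∈ m.primeFactors, m.factorization q ≠ N.factorization q) :
    Nat.card {β : X → Equiv.Perm X //
      (∀ i j : X, i ≠ j → ∀ x : X, (β i * (β j)⁻¹) x ≠ x) ∧
      ∃ H : Subgroup (Equiv.Perm X), (H : Set (Equiv.Perm X)) = Set.range β ∧
        Nonempty (Additive H ≃+ ZMod m × ZMod N)} =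
    (m * N).factorial * (m * N - 1).factorial / (m.gcd N ^ 2 * m.totient * N.totient) := by
  let G := Multiplicative (ZMod m × ZMod N)
  have hG : Nat.card G = m * N := by
    rw [Nat.card_congr Multiplicative.toAdd, Nat.card_prod, Nat.card_zmod, Nat.card_zmod]
  have hAut : Nat.card (MulAut G) = m.gcd N ^ 2 * m.totient * N.totient := by
    rw [← card_addAut_zmod_prod h]
    exact Nat.card_congr AddEquiv.toMultiplicative.symm
  have hcount := card_isGroupTuple_mul_card_mulAut (hX.trans hG.symm) (hG.trans hX.symm)
  rw [hG, hAut] at hcount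
  simp only [IsGroupTuple, G, ← AddEquiv.toMultiplicativeRight.nonempty_congr] at hcount
  have hpos : 0 < m.gcd N ^ 2 * m.totient * N.totient := hAut ▸ Nat.card_pos
  exact (Nat.div_eq_of_eq_mul_left hpos hcount.symm).symm

/-- Theorem 4.11, case `e < n/2`: the number of permutation polynomial tuples `(β_0,…,β_{q−1})`
whose entries form a subgroup of `S_q` isomorphic to `Z_{p^e} × Z_{p^{n−e}}` (the number of
`e`-Klenian polynomials over `F_q`) equals `(p^n)!(p^n−1)! / (p^{2e} φ(p^e) φ(p^{n−e}))`. -/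
theorem statement16 (p n e : ℕ) (hp : p.Prime) (hn : 2 ≤ n)
    (he1 : 1 ≤ e) (he2 : 2 * e < n) :
    Nat.card {β : Fin (p ^ n) → Equiv.Perm (Fin (p ^ n)) //
      (∀ i j : Fin (p ^ n), i ≠ j → ∀ x : Fin (p ^ n), (β i * (β j)⁻¹) x ≠ x) ∧
      ∃ H : Subgroup (Equiv.Perm (Fin (p ^ n))),
        (H : Set (Equiv.Perm (Fin (p ^ n)))) = Set.range β ∧
        Nonempty (Additive H ≃+ ZMod (p ^ e) × ZMod (p ^ (n - e)))} =
    Nat.factorial (p ^ n) * Nat.factorial (p ^ n - 1) /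
      (p ^ (2 * e) * Nat.totient (p ^ e) * Nat.totient (p ^ (n - e))) := by
  have : NeZero p := ⟨hp.ne_zero⟩
  have hmul : p ^ e * p ^ (n - e) = p ^ n := by rw [← pow_add, Nat.add_sub_cancel' (by lia)]
  have hcount := statement16_general ((Nat.card_fin _).trans hmul.symm)
    (factorization_pow_ne_factorization_pow hp (by lia))
  rwa [hmul, Nat.gcd_eq_left (pow_dvd_pow p (by lia)), ← pow_mul, mul_comm e 2] at hcount
end
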